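/- arXiv:2004.06335 — 2 statements merged into one kernel-verified Lean document; each statement's English description precedes it below -/
import Mathlib

section
/- Let n ≥ 2 and λ ∈ Γ with λ₁ ≥ λ₂ ≥ … ≥ λₙ. Then for every index k with 2 ≤ k ≤ n one has (1/(n−1))·(1/μ₁(λ)) ≤ f_k(λ) ≤ 1/μ₁(λ). -/
open Finset

/-- `μ_k(λ) = (1/(n−1)) · ∑_{i ≠ k} λ_i`. -/
noncomputable def muOf (n : ℕ) (lam : Fin n → ℝ) (k : Fin n) : ℝ :=
  ((n : ℝ) - 1)⁻¹ * ∑ i ∈ Finset.univ.erase k, lam i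

/-- The cone `Γ = {λ ∈ ℝⁿ : μ_k(λ) > 0 for all k}`. -/
def GammaCone (n : ℕ) : Set (Fin n → ℝ) :=
  {lam | ∀ k, 0 < muOf n lam k}

/-- `f(λ) = ∑_k log μ_k(λ)`. -/
noncomputable def fOf (n : ℕ) (lam : Fin n → ℝ) : ℝ :=
  ∑ k, Real.log (muOf n lam k)

/-- `f_i(λ) = (1/(n−1)) · ∑_{k ≠ i} 1/μ_k(λ)`, the `i`-th partial derivative of `f`. -/
noncomputable def fDer (n : ℕ) (lam : Fin n → ℝ) (i : Fin n) : ℝ :=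
  ((n : ℝ) - 1)⁻¹ * ∑ k ∈ Finset.univ.erase i, (muOf n lam k)⁻¹

theorem stmt7 (n : ℕ) (hn : 2 ≤ n) (lam : Fin n → ℝ) (hlam : lam ∈ GammaCone n)
    (hord : Antitone lam) :
    ∀ k : Fin n, k ≠ ⟨0, by omega⟩ →
      ((n : ℝ) - 1)⁻¹ * (muOf n lam ⟨0, by omega⟩)⁻¹ ≤ fDer n lam k ∧
      fDer n lam k ≤ (muOf n lam ⟨0, by omega⟩)⁻¹ := by
  intro k hk
  have hn1 : (0:ℝ) < (n:ℝ) - 1 := by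
    have : (2:ℝ) ≤ n := by exact_mod_cast hn
    linarith
  have hpos : ∀ j, 0 < muOf n lam j := hlam
  have hle : ∀ j, muOf n lam ⟨0, by omega⟩ ≤ muOf n lam j := by
    intro j
    unfold muOf
    apply mul_le_mul_of_nonneg_left _ (inv_nonneg.mpr hn1.le)
    have h0 := Finset.add_sum_erase Finset.univ lam (Finset.mem_univ (⟨0, by omega⟩ : Fin n))
    have hj := Finset.add_sum_erase Finset.univ lam (Finset.mem_univ j)
    have : lam j ≤ lam ⟨0, by omega⟩ := hord (Fin.mk_le_of_le_val (Nat.zero_le _))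
    linarith
  unfold fDer
  constructor
  · apply mul_le_mul_of_nonneg_left _ (inv_nonneg.mpr hn1.le)
    exact Finset.single_le_sum (f := fun j => (muOf n lam j)⁻¹)
      (fun j _ => (inv_pos.mpr (hpos j)).le)
      (Finset.mem_erase.mpr ⟨hk.symm, Finset.mem_univ _⟩)
  · rw [inv_mul_le_iff₀ hn1]
    have h := Finset.sum_le_card_nsmul (Finset.univ.erase k) (fun j => (muOf n lam j)⁻¹)
      ((muOf n lam ⟨0, by omega⟩)⁻¹) (fun j _ => inv_anti₀ (hpos _) (hle j))
    rw [Finset.card_erase_of_mem (Finset.mem_univ k), Finset.card_univ, Fintype.card_fin,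
      nsmul_eq_mul, Nat.cast_sub (by omega), Nat.cast_one] at h
    exact h
end

section
/- Let n ≥ 2, let μ_k(λ) = (1/(n−1)) Σ_{i≠k} λ_i, Γ = {λ ∈ ℝⁿ : μ_k(λ) > 0 for all k}, f(λ) = Σ_k log μ_k(λ), and f_i = ∂f/∂λ_i. Let K be a compact subset of Γ and let c₁ ≤ c₂ be real constants. Then there exist constants R > 0 and κ ∈ (0,1), depending only on n, K, c₁, c₂, such that for every λ ∈ Γ with λ₁ ≥ λ₂ ≥ … ≥ λₙ, |λ| ≥ R and c₁ ≤ f(λ) ≤ c₂, and every χ ∈ K with χ₁ ≥ χ₂ ≥ … ≥ χₙ, at least one of the following holds: (a) Σ_{k=1}ⁿ f_k(λ)·(χ_k − λ_k) > κ·Σ_{k=1}ⁿ f_k(λ); or (b) f_k(λ) > κ·Σ_{i=1}ⁿ f_i(λ) for every k = 1,…,n. In addition, Σ_{i=1}ⁿ f_i(λ) ≥ κ. -/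
open Finset

theorem fDer_eq (n : ℕ) (lam : Fin n → ℝ) (i : Fin n) :
    fDer n lam i = ((n : ℝ) - 1)⁻¹ * (∑ k, (muOf n lam k)⁻¹ - (muOf n lam i)⁻¹) := by
  unfold fDer
  rw [← Finset.add_sum_erase _ _ (Finset.mem_univ i)]
  ring

theorem muOf_eq (n : ℕ) (lam : Fin n → ℝ) (i : Fin n) :
    muOf n lam i = ((n : ℝ) - 1)⁻¹ * (∑ k, lam k - lam i) := by
  unfold muOf
  rw [← Finset.add_sum_erase _ _ (Finset.mem_univ i)]
  ring

theorem sum_fDer_mul (n : ℕ) (lam x : Fin n → ℝ) :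
    ∑ k, fDer n lam k * x k = ∑ k, (muOf n lam k)⁻¹ * muOf n x k := by
  have h1 : ∀ k, fDer n lam k * x k = ((n : ℝ) - 1)⁻¹ *
      ((∑ j, (muOf n lam j)⁻¹) * x k - (muOf n lam k)⁻¹ * x k) := by
    intro k; rw [fDer_eq]; ring
  have h2 : ∀ k, (muOf n lam k)⁻¹ * muOf n x k = ((n : ℝ) - 1)⁻¹ *
      ((muOf n lam k)⁻¹ * (∑ j, x j) - (muOf n lam k)⁻¹ * x k) := by
    intro k; rw [muOf_eq n x]; ring
  simp_rw [h1, h2, ← Finset.mul_sum, Finset.sum_sub_distrib, ← Finset.mul_sum, ← Finset.sum_mul]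

theorem exists_delta (n : ℕ) (K : Set (Fin n → ℝ)) (hKcpt : IsCompact K)
    (hKsub : K ⊆ GammaCone n) : ∃ δ : ℝ, 0 < δ ∧ δ ≤ 1 ∧ ∀ χ ∈ K, ∀ k, δ ≤ muOf n χ k := by
  have h : ∀ k : Fin n, ∃ d : ℝ, 0 < d ∧ ∀ χ ∈ K, d ≤ muOf n χ k := by
    intro k
    rcases K.eq_empty_or_nonempty with h | h
    · exact ⟨1, one_pos, by simp [h]⟩
    · have hc : Continuous (fun χ : Fin n → ℝ => muOf n χ k) := by
        unfold muOf; fun_prop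
      obtain ⟨x, hx, hm⟩ := hKcpt.exists_isMinOn h hc.continuousOn
      exact ⟨muOf n x k, hKsub hx k, fun χ hχ => hm hχ⟩
  choose d hd hdK using h
  have : ∀ s : Finset (Fin n), ∃ δ : ℝ, 0 < δ ∧ δ ≤ 1 ∧ ∀ k ∈ s, δ ≤ d k := by
    intro s
    induction s using Finset.induction_on with
    | empty => exact ⟨1, one_pos, le_rfl, by simp⟩
    | insert a s _ ih =>
      obtain ⟨δ, h0, h1, h2⟩ := ih
      refine ⟨min δ (d a), lt_min h0 (hd a), (min_le_left _ _).trans h1, ?_⟩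
      intro k hk
      rcases Finset.mem_insert.1 hk with rfl | hk
      · exact min_le_right _ _
      · exact (min_le_left _ _).trans (h2 k hk)
  obtain ⟨δ, h0, h1, h2⟩ := this Finset.univ
  exact ⟨δ, h0, h1, fun χ hχ k => (h2 k (Finset.mem_univ k)).trans (hdK k χ hχ)⟩

theorem norm_bound (n : ℕ) (hn : 2 ≤ n) (lam : Fin n → ℝ) (hl : lam ∈ GammaCone n)
    (c T : ℝ) (hT : 1 ≤ T) (hf : fOf n lam ≤ c) (hP : ∑ k, (muOf n lam k)⁻¹ ≤ T) :
    ‖lam‖ ≤ n * Real.exp (c + n * Real.log T) := by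
  have hn' : (2 : ℝ) ≤ n := by exact_mod_cast hn
  have hn1 : (n : ℝ) - 1 ≠ 0 := by linarith
  have hT0 : 0 < T := by linarith
  have hpos : ∀ k, 0 < muOf n lam k := hl
  have h1 : ∀ k, 0 ≤ Real.log (muOf n lam k) + Real.log T := by
    intro k
    have : (muOf n lam k)⁻¹ ≤ T := le_trans
      (Finset.single_le_sum (f := fun k => (muOf n lam k)⁻¹)
        (fun j _ => (inv_pos.2 (hpos j)).le) (Finset.mem_univ k)) hP
    rw [← Real.log_mul (hpos k).ne' hT0.ne']
    apply Real.log_nonneg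
    have := mul_le_mul_of_nonneg_left this (hpos k).le
    rwa [mul_inv_cancel₀ (hpos k).ne'] at this
  set B := Real.exp (c + n * Real.log T) with hB
  have h2 : ∀ k, muOf n lam k ≤ B := by
    intro k
    have h3 := Finset.single_le_sum (f := fun k => Real.log (muOf n lam k) + Real.log T)
        (fun j _ => h1 j) (Finset.mem_univ k)
    rw [Finset.sum_add_distrib] at h3
    simp only [Finset.sum_const, Finset.card_univ, Fintype.card_fin, nsmul_eq_mul] at h3
    unfold fOf at hf
    have := Real.log_nonneg hT
    rw [hB, ← Real.log_le_iff_le_exp (hpos k)]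
    linarith
  have hS : ∑ k, muOf n lam k = ∑ k, lam k := by
    simp_rw [muOf_eq, ← Finset.mul_sum, Finset.sum_sub_distrib]
    simp only [Finset.sum_const, Finset.card_univ, Fintype.card_fin, nsmul_eq_mul]
    field_simp
  have hS0 : 0 ≤ ∑ k, lam k := hS ▸ Finset.sum_nonneg (fun k _ => (hpos k).le)
  have hS1 : ∑ k, lam k ≤ n * B := by
    rw [← hS]
    refine (Finset.sum_le_sum (fun k _ => h2 k)).trans ?_
    simp
  have hB0 : 0 < B := Real.exp_pos _
  rw [pi_norm_le_iff_of_nonneg (by positivity)]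
  intro k
  have h4 : lam k = ∑ j, lam j - (n - 1) * muOf n lam k := by
    rw [muOf_eq]; field_simp; ring
  have h5 : 0 ≤ ((n : ℝ) - 1) * muOf n lam k := mul_nonneg (by linarith) (hpos k).le
  have h6 : ((n : ℝ) - 1) * muOf n lam k ≤ (n - 1) * B :=
    mul_le_mul_of_nonneg_left (h2 k) (by linarith)
  rw [Real.norm_eq_abs, abs_le]
  constructor <;> linarith

theorem stmt17 (n : ℕ) (hn : 2 ≤ n) (K : Set (Fin n → ℝ)) (hKcpt : IsCompact K)
    (hKsub : K ⊆ GammaCone n) (c₁ c₂ : ℝ) (hc : c₁ ≤ c₂) :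
    ∃ R : ℝ, 0 < R ∧ ∃ κ ∈ Set.Ioo (0 : ℝ) 1,
      ∀ lam ∈ GammaCone n, Antitone lam → R ≤ ‖lam‖ →
        c₁ ≤ fOf n lam → fOf n lam ≤ c₂ →
        ∀ χ ∈ K, Antitone χ →
          ((κ * ∑ k, fDer n lam k < ∑ k, fDer n lam k * (χ k - lam k)) ∨
           (∀ k, κ * ∑ i, fDer n lam i < fDer n lam k)) ∧
          κ ≤ ∑ i, fDer n lam i := by
  obtain ⟨δ, hδ0, hδ1, hδ⟩ := exists_delta n K hKcpt hKsub
  have hn' : (2 : ℝ) ≤ n := by exact_mod_cast hn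
  have hn1 : (n : ℝ) - 1 ≠ 0 := by linarith
  have hT : 1 ≤ 2 * n / δ := by
    rw [le_div_iff₀ hδ0]; linarith
  refine ⟨n * Real.exp (c₂ + n * Real.log (2 * n / δ)) + 1, by positivity, δ / 2,
    ⟨by linarith, by linarith⟩, ?_⟩
  intro lam hl _ hR _ hf χ hχ _
  have hpos : ∀ k, 0 < muOf n lam k := hl
  have hP : 2 * n / δ < ∑ k, (muOf n lam k)⁻¹ := by
    by_contra h
    have := norm_bound n hn lam hl c₂ _ hT hf (not_lt.1 h)
    linarith
  have hsum : ∑ k, fDer n lam k = ∑ k, (muOf n lam k)⁻¹ := by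
    have h := sum_fDer_mul n lam (fun _ => 1)
    have h1 : ∀ k, muOf n (fun _ => (1 : ℝ)) k = 1 := by
      intro k; rw [muOf_eq]; simp [hn1]
    simpa [h1] using h
  have hsum2 : ∑ k, fDer n lam k * (χ k - lam k) = ∑ k, (muOf n lam k)⁻¹ * muOf n χ k - n := by
    simp_rw [mul_sub, Finset.sum_sub_distrib, sum_fDer_mul]
    congr 1
    rw [Finset.sum_congr rfl (fun k _ => inv_mul_cancel₀ (hpos k).ne')]
    simp
  have hge : (∑ k, (muOf n lam k)⁻¹) * δ ≤ ∑ k, (muOf n lam k)⁻¹ * muOf n χ k := by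
    rw [Finset.sum_mul]
    exact Finset.sum_le_sum fun k _ =>
      mul_le_mul_of_nonneg_left (hδ χ hχ k) (inv_pos.2 (hpos k)).le
  rw [hsum2, hsum]
  refine ⟨Or.inl ?_, by linarith⟩
  rw [div_lt_iff₀ hδ0] at hP
  linarith
end
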